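/- Let C be a braided monoidal category in which coequalizers are preserved by the monoidal product, and let (A,t₁,t₂,t₃,t₄,e₁,e₂,j) be a regular weak multiplier bimonoid in C such that m := (j⊗1)∘t₁ is a regular epimorphism and non-degenerate with respect to some class of objects containing I, A and A⊗A. Then: (1) there is a unique morphism g : A⊗A → A⊗A satisfying g∘(1⊗m) = (⊓̄ᴿ₂⊗1)∘(1⊗t₁), and it equivalently satisfies g∘(m⊗1) = (1⊗⊓̄ᴸ₁)∘(t₂⊗1); (2) (m⊗1)∘(1⊗c)∘(g⊗1) = (m⊗1)∘(1⊗e₁)∘(1⊗c) and (1⊗m)∘(c⊗1)∘(1⊗g) = (1⊗m)∘(e₂⊗1)∘(c⊗1); (3) g∘(m⊗1) = (m⊗1)∘(1⊗g) and g∘(1⊗m) = (1⊗m)∘(g⊗1); (4) (1⊗j)∘g = (1⊗j)∘t₁ = ⊓̄ᴿ₂ and (j⊗1)∘g = (j⊗1)∘t₂ = ⊓̄ᴸ₁. -/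

import Mathlib

open CategoryTheory Category MonoidalCategory Limits

universe v u

namespace WeakMultiplierBimonoid

variable {C : Type u} [Category.{v} C] [MonoidalCategory C] [BraidedCategory C]

def wl {A : C} (f : A ⊗ A ⟶ A ⊗ A) : A ⊗ (A ⊗ A) ⟶ A ⊗ (A ⊗ A) :=
  (α_ A A A).inv ≫ (f ▷ A) ≫ (α_ A A A).hom

def ml {A : C} (f : A ⊗ A ⟶ A) : A ⊗ (A ⊗ A) ⟶ A ⊗ A :=
  (α_ A A A).inv ≫ (f ▷ A)

def NdLeftOn {Z V W : C} (v : Z ⊗ V ⟶ W) (𝒴 : Set C) : Prop :=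
  ∀ (X : C), ∀ Y ∈ 𝒴, Function.Injective
    (fun g : X ⟶ V ⊗ Y => (Z ◁ g) ≫ (α_ Z V Y).inv ≫ (v ▷ Y))

def NdRightOn {Z V W : C} (v : Z ⊗ V ⟶ W) (𝒴 : Set C) : Prop :=
  NdLeftOn ((β_ V Z).hom ≫ v) 𝒴

/-- The "middle braiding" `1 ⊗ c ⊗ 1 : A⁴ ⟶ A⁴` on `(A ⊗ A) ⊗ (A ⊗ A)`. -/
def midSw (A : C) : (A ⊗ A) ⊗ (A ⊗ A) ⟶ (A ⊗ A) ⊗ (A ⊗ A) :=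
  (α_ A A (A ⊗ A)).hom ≫ (A ◁ (α_ A A A).inv) ≫ (A ◁ ((β_ A A).hom ▷ A)) ≫
    (A ◁ (α_ A A A).hom) ≫ (α_ A A (A ⊗ A)).inv

/-- A regular weak multiplier bimonoid on an object `A` of a braided monoidal category,
with multiplication non-degenerate with respect to the class `𝒴`
(Definition 2.9 of the paper). -/
structure RWMB (A : C) (𝒴 : Set C) where
  t₁ : A ⊗ A ⟶ A ⊗ A
  t₂ : A ⊗ A ⟶ A ⊗ A
  t₃ : A ⊗ A ⟶ A ⊗ A
  t₄ : A ⊗ A ⟶ A ⊗ A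
  e₁ : A ⊗ A ⟶ A ⊗ A
  e₂ : A ⊗ A ⟶ A ⊗ A
  j : A ⟶ 𝟙_ C
  /-- the induced multiplication -/
  m : A ⊗ A ⟶ A
  /-- counit condition (m1); in particular `m` is the induced multiplication -/
  hm₁ : m = t₁ ≫ (j ▷ A) ≫ (λ_ A).hom
  /-- counit condition (m2) -/
  hm₂ : m = t₂ ≫ (A ◁ j) ≫ (ρ_ A).hom
  /-- counit condition (m3) -/
  hm₃ : m = (β_ A A).hom ≫ t₃ ≫ (j ▷ A) ≫ (λ_ A).hom
  /-- counit condition (m4) -/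
  hm₄ : m = (β_ A A).hom ≫ t₄ ≫ (A ◁ j) ≫ (ρ_ A).hom
  /-- the class `𝒴` contains the monoidal unit -/
  memI : (𝟙_ C) ∈ 𝒴
  memA : A ∈ 𝒴
  memAA : (A ⊗ A) ∈ 𝒴
  /-- `m` is non-degenerate on the left with respect to `𝒴` -/
  ndl : NdLeftOn m 𝒴
  /-- `m` is non-degenerate on the right with respect to `𝒴` -/
  ndr : NdRightOn m 𝒴
  /-- relation (c12) -/
  hc12 : (A ◁ t₁) ≫ ml m = wl t₂ ≫ (A ◁ m)
  /-- relation (c13) -/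
  hc13 : wl t₁ ≫ (A ◁ (β_ A A).hom) ≫ (A ◁ m)
    = (A ◁ (β_ A A).hom) ≫ wl t₃ ≫ (A ◁ m)
  /-- relation (c14) -/
  hc14 : (A ◁ t₁) ≫ wl (β_ A A).hom ≫ ml m = wl t₄ ≫ (A ◁ m)
  /-- relation (c23) -/
  hc23 : wl t₂ ≫ (A ◁ (β_ A A).hom) ≫ (A ◁ m) = (A ◁ t₃) ≫ ml m
  /-- relation (c24) -/
  hc24 : (A ◁ t₂) ≫ wl (β_ A A).hom ≫ ml m = wl (β_ A A).hom ≫ (A ◁ t₄) ≫ ml m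
  /-- relation (c34) -/
  hc34 : (A ◁ t₃) ≫ wl (β_ A A).hom ≫ ml m = wl t₄ ≫ (A ◁ (β_ A A).hom) ≫ (A ◁ m)
  /-- interchange relation for `(t₂, t₁)` -/
  hi21 : (A ◁ t₁) ≫ wl t₂ = wl t₂ ≫ (A ◁ t₁)
  /-- interchange relation for `(t₄, t₁)` -/
  hi41 : (A ◁ t₁) ≫ wl t₄ = wl t₄ ≫ (A ◁ t₁)
  /-- interchange relation for `(t₂, t₃)` -/
  hi23 : (A ◁ t₃) ≫ wl t₂ = wl t₂ ≫ (A ◁ t₃)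
  /-- interchange relation for `(t₄, t₃)` -/
  hi43 : (A ◁ t₃) ≫ wl t₄ = wl t₄ ≫ (A ◁ t₃)
  /-- compatibility of the idempotents `e₁`, `e₂`:
  `(m ⊗ m) ∘ (1 ⊗ c ⊗ 1) ∘ (1 ⊗ 1 ⊗ e₁) = (m ⊗ m) ∘ (1 ⊗ c ⊗ 1) ∘ (e₂ ⊗ 1 ⊗ 1)` -/
  hecomp : ((A ⊗ A) ◁ e₁) ≫ midSw A ≫ (m ▷ (A ⊗ A)) ≫ (A ◁ m)
    = (e₂ ▷ (A ⊗ A)) ≫ midSw A ≫ (m ▷ (A ⊗ A)) ≫ (A ◁ m)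
  /-- Axiom I for the weakly counital fusion morphism `(t₁, e₁, j)` -/
  ax1 : (A ◁ t₁) ≫ wl (β_ A A).hom ≫ (A ◁ t₁) ≫ wl (β_ A A).inv ≫ wl t₁
    = wl t₁ ≫ (A ◁ t₁)
  /-- Axiom II -/
  ax2 : e₁ ≫ e₁ = e₁
  /-- Axiom III -/
  ax3 : t₁ ≫ e₁ = t₁
  /-- Axiom IV -/
  ax4 : (A ◁ e₁) ≫ (A ◁ (β_ A A).inv) ≫ wl t₁ ≫ (A ◁ (β_ A A).hom) ≫ ml m
    = (A ◁ (β_ A A).inv) ≫ wl t₁ ≫ (A ◁ (β_ A A).hom) ≫ ml m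
  /-- Axiom V -/
  ax5 : (A ◁ t₁) ≫ wl e₁ = wl e₁ ≫ (A ◁ t₁)
  /-- Axiom VI -/
  ax6 : wl t₁ ≫ (A ◁ e₁)
    = (A ◁ (β_ A A).inv) ≫ wl e₁ ≫ (A ◁ (β_ A A).hom) ≫ wl t₁
  /-- Axiom VII -/
  ax7 : wl t₁ ≫ (A ◁ ((j ▷ A) ≫ (λ_ A).hom)) ≫ m
    = (A ◁ (β_ A A).hom) ≫ (A ◁ e₁) ≫ (A ◁ ((A ◁ j) ≫ (ρ_ A).hom)) ≫ m
  /-- Axiom VIII -/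
  ax8 : wl t₁ ≫ (A ◁ (β_ A A).hom) ≫ ml m ≫ (j ▷ A) ≫ (λ_ A).hom
    = (A ◁ (β_ A A).hom) ≫ (A ◁ e₁) ≫ (A ◁ ((j ▷ A) ≫ (λ_ A).hom)) ≫ m

namespace RWMB

variable {A : C} {𝒴 : Set C} (S : RWMB A 𝒴)

/-- `⊓ᴸ₁ := (j ⊗ 1) ∘ e₁`. -/
def piL1 : A ⊗ A ⟶ A := S.e₁ ≫ (S.j ▷ A) ≫ (λ_ A).hom

/-- `⊓ᴸ₂ := (j ⊗ 1) ∘ t₄ ∘ c`. -/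
def piL2 : A ⊗ A ⟶ A := (β_ A A).hom ≫ S.t₄ ≫ (S.j ▷ A) ≫ (λ_ A).hom

/-- `⊓̄ᴿ₁ ∘ c⁻¹ = (1 ⊗ j) ∘ e₁`, the second leg of the coequalizer defining the base
object. -/
def piBarR1c : A ⊗ A ⟶ A := S.e₁ ≫ (A ◁ S.j) ≫ (ρ_ A).hom

end RWMB


/-- `⊓̄ᴿ₂ := (1 ⊗ j) ∘ t₁`. -/
def RWMB.piBarR2 {A : C} {𝒴 : Set C} (S : RWMB A 𝒴) : A ⊗ A ⟶ A :=
  S.t₁ ≫ (A ◁ S.j) ≫ (ρ_ A).hom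

/-- `⊓̄ᴸ₁ := (j ⊗ 1) ∘ t₂`. -/
def RWMB.piBarL1 {A : C} {𝒴 : Set C} (S : RWMB A 𝒴) : A ⊗ A ⟶ A :=
  S.t₂ ≫ (S.j ▷ A) ≫ (λ_ A).hom


section Strict

set_option linter.unusedSectionVars false

def W {A : C} (f : A ⊗ A ⟶ A ⊗ A) (Z : C) : A ⊗ (A ⊗ Z) ⟶ A ⊗ (A ⊗ Z) :=
  (α_ A A Z).inv ≫ (f ▷ Z) ≫ (α_ A A Z).hom

def M {A : C} (f : A ⊗ A ⟶ A) (Z : C) : A ⊗ (A ⊗ Z) ⟶ A ⊗ Z :=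
  (α_ A A Z).inv ≫ (f ▷ Z)

def J {A : C} (f : A ⟶ 𝟙_ C) (Z : C) : A ⊗ Z ⟶ Z :=
  (f ▷ Z) ≫ (λ_ Z).hom

def B (A Z : C) : A ⊗ (A ⊗ Z) ⟶ A ⊗ (A ⊗ Z) := W (β_ A A).hom Z
def Bi (A Z : C) : A ⊗ (A ⊗ Z) ⟶ A ⊗ (A ⊗ Z) := W (β_ A A).inv Z

/-- reassociation -/
def pre3 (A Z : C) : A ⊗ (A ⊗ (A ⊗ Z)) ⟶ (A ⊗ (A ⊗ A)) ⊗ Z :=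
  (A ◁ (α_ A A Z).inv) ≫ (α_ A (A ⊗ A) Z).inv

def post3 (A Z : C) : (A ⊗ (A ⊗ A)) ⊗ Z ⟶ A ⊗ (A ⊗ (A ⊗ Z)) :=
  (α_ A (A ⊗ A) Z).hom ≫ (A ◁ (α_ A A Z).hom)

def pre4 (A Z : C) : A ⊗ (A ⊗ (A ⊗ (A ⊗ Z))) ⟶ ((A ⊗ A) ⊗ (A ⊗ A)) ⊗ Z :=
  (A ◁ A ◁ (α_ A A Z).inv) ≫ (α_ A A _).inv ≫ (α_ (A ⊗ A) (A ⊗ A) Z).inv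

variable {A : C}

lemma W_nat (f : A ⊗ A ⟶ A ⊗ A) {Z Z' : C} (h : Z ⟶ Z') :
    A ◁ A ◁ h ≫ W f Z' = W f Z ≫ A ◁ A ◁ h := by
  simp only [W, assoc]
  rw [associator_inv_naturality_right_assoc, ← associator_naturality_right,
    whisker_exchange_assoc]

lemma M_nat (f : A ⊗ A ⟶ A) {Z Z' : C} (h : Z ⟶ Z') :
    A ◁ A ◁ h ≫ M f Z' = M f Z ≫ A ◁ h := by
  simp only [M, assoc]
  rw [associator_inv_naturality_right_assoc, whisker_exchange]

lemma J_nat (f : A ⟶ 𝟙_ C) {Z Z' : C} (h : Z ⟶ Z') :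
    A ◁ h ≫ J f Z' = J f Z ≫ h := by
  simp only [J, assoc]
  rw [whisker_exchange_assoc, leftUnitor_naturality]

lemma B_nat {Z Z' : C} (h : Z ⟶ Z') : A ◁ A ◁ h ≫ B A Z' = B A Z ≫ A ◁ A ◁ h := W_nat _ h
lemma Bi_nat {Z Z' : C} (h : Z ⟶ Z') : A ◁ A ◁ h ≫ Bi A Z' = Bi A Z ≫ A ◁ A ◁ h := W_nat _ h

lemma B_Bi (Z : C) : B A Z ≫ Bi A Z = 𝟙 _ := by
  simp [B, Bi, W]

lemma Bi_B (Z : C) : Bi A Z ≫ B A Z = 𝟙 _ := by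
  simp [B, Bi, W]

lemma B_J (j : A ⟶ 𝟙_ C) (Z : C) : B A Z ≫ J j (A ⊗ Z) = A ◁ J j Z := by
  have h : (β_ A A).hom ≫ (j ▷ A) ≫ (λ_ A).hom = (A ◁ j) ≫ (ρ_ A).hom := by
    rw [← BraidedCategory.braiding_naturality_right_assoc]; simp
  calc _ = (α_ A A Z).inv ≫ ((β_ A A).hom ≫ (j ▷ A) ≫ (λ_ A).hom) ▷ Z := by
        simp only [B, W, J]; monoidal
    _ = _ := by rw [h]; simp only [J]; monoidal

lemma B_J' (j : A ⟶ 𝟙_ C) (Z : C) : B A Z ≫ A ◁ J j Z = J j (A ⊗ Z) := by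
  have h : (β_ A A).hom ≫ (A ◁ j) ≫ (ρ_ A).hom = (j ▷ A) ≫ (λ_ A).hom := by
    rw [← BraidedCategory.braiding_naturality_left_assoc]; simp
  calc _ = (α_ A A Z).inv ≫ ((β_ A A).hom ≫ (A ◁ j) ≫ (ρ_ A).hom) ▷ Z := by
        simp only [B, W, J]; monoidal
    _ = _ := by rw [h]; simp only [J]; monoidal

/-- `β_{A, A ⊗ A}` -/
lemma hexR (A : C) : (β_ A (A ⊗ A)).hom = (α_ A A A).inv ≫ (β_ A A).hom ▷ A ≫ (α_ A A A).hom ≫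
    A ◁ (β_ A A).hom ≫ (α_ A A A).inv := by
  simp

lemma hexL (A : C) : (β_ (A ⊗ A) A).hom = (α_ A A A).hom ≫ A ◁ (β_ A A).hom ≫ (α_ A A A).inv ≫
    (β_ A A).hom ▷ A ≫ (α_ A A A).hom := by
  simp

lemma hexRi (A : C) : (β_ A (A ⊗ A)).inv = (α_ A A A).hom ≫ A ◁ (β_ A A).inv ≫ (α_ A A A).inv ≫
    (β_ A A).inv ▷ A ≫ (α_ A A A).hom := by
  simp

lemma hexLi (A : C) : (β_ (A ⊗ A) A).inv = (α_ A A A).inv ≫ (β_ A A).inv ▷ A ≫ (α_ A A A).hom ≫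
    A ◁ (β_ A A).inv ≫ (α_ A A A).inv := by
  simp

lemma M_B (m : A ⊗ A ⟶ A) (Z : C) :
    M m (A ⊗ Z) ≫ B A Z = A ◁ B A Z ≫ B A (A ⊗ Z) ≫ A ◁ M m Z := by
  have h : (m ▷ A) ≫ (β_ A A).hom = (β_ (A ⊗ A) A).hom ≫ A ◁ m := by simp
  rw [hexL] at h
  calc _ = 𝟙 _ ⊗≫ ((m ▷ A) ≫ (β_ A A).hom) ▷ Z ⊗≫ 𝟙 _ := by simp only [M, B, W]; monoidal
    _ = _ := by rw [h]; simp only [M, B, W]; monoidal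

lemma B_M (m : A ⊗ A ⟶ A) (Z : C) :
    A ◁ M m Z ≫ B A Z = B A (A ⊗ Z) ≫ A ◁ B A Z ≫ M m (A ⊗ Z) := by
  have h : (A ◁ m) ≫ (β_ A A).hom = (β_ A (A ⊗ A)).hom ≫ m ▷ A := by simp
  rw [hexR] at h
  calc _ = 𝟙 _ ⊗≫ ((A ◁ m) ≫ (β_ A A).hom) ▷ Z ⊗≫ 𝟙 _ := by simp only [M, B, W]; monoidal
    _ = _ := by rw [h]; simp only [M, B, W]; monoidal

lemma Bi_M (m : A ⊗ A ⟶ A) (Z : C) :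
    A ◁ M m Z ≫ Bi A Z = Bi A (A ⊗ Z) ≫ A ◁ Bi A Z ≫ M m (A ⊗ Z) := by
  have h : (A ◁ m) ≫ (β_ A A).inv = (β_ (A ⊗ A) A).inv ≫ m ▷ A := by simp
  rw [hexLi] at h
  calc _ = 𝟙 _ ⊗≫ ((A ◁ m) ≫ (β_ A A).inv) ▷ Z ⊗≫ 𝟙 _ := by simp only [M, Bi, W]; monoidal
    _ = _ := by rw [h]; simp only [M, Bi, W]; monoidal

lemma M_Bi (m : A ⊗ A ⟶ A) (Z : C) :
    M m (A ⊗ Z) ≫ Bi A Z = A ◁ Bi A Z ≫ Bi A (A ⊗ Z) ≫ A ◁ M m Z := by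
  have h : (m ▷ A) ≫ (β_ A A).inv = (β_ A (A ⊗ A)).inv ≫ A ◁ m := by simp
  rw [hexRi] at h
  calc _ = 𝟙 _ ⊗≫ ((m ▷ A) ≫ (β_ A A).inv) ▷ Z ⊗≫ 𝟙 _ := by simp only [M, Bi, W]; monoidal
    _ = _ := by rw [h]; simp only [M, Bi, W]; monoidal

/-- strand passing, `f` at position 0 -/
lemma W_BB (f : A ⊗ A ⟶ A ⊗ A) (Z : C) :
    W f (A ⊗ Z) ≫ A ◁ B A Z ≫ B A (A ⊗ Z) = A ◁ B A Z ≫ B A (A ⊗ Z) ≫ A ◁ W f Z := by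
  have h : (f ▷ A) ≫ (β_ (A ⊗ A) A).hom = (β_ (A ⊗ A) A).hom ≫ A ◁ f := by simp only [BraidedCategory.braiding_naturality_left]
  rw [hexL] at h
  calc _ = 𝟙 _ ⊗≫ ((f ▷ A) ≫ (α_ A A A).hom ≫ A ◁ (β_ A A).hom ≫ (α_ A A A).inv ≫
    (β_ A A).hom ▷ A ≫ (α_ A A A).hom) ▷ Z ⊗≫ 𝟙 _ := by simp only [B, W]; monoidal
    _ = _ := by rw [h]; simp only [B, W]; monoidal

end Strict

namespace RWMB
variable {A : C} {𝒴 : Set C} (S : RWMB A 𝒴)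

lemma z_m1 (Z : C) : W S.t₁ Z ≫ J S.j (A ⊗ Z) = M S.m Z := by
  calc _ = (α_ A A Z).inv ≫ (S.t₁ ≫ (S.j ▷ A) ≫ (λ_ A).hom) ▷ Z := by
        simp only [W, J]; monoidal
    _ = _ := by rw [← S.hm₁]; simp only [M]

lemma z_c12 (Z : C) : A ◁ W S.t₁ Z ≫ M S.m (A ⊗ Z) = W S.t₂ (A ⊗ Z) ≫ A ◁ M S.m Z := by
  calc _ = pre3 A Z ≫ ((A ◁ S.t₁) ≫ ml S.m) ▷ Z ≫ (α_ A A Z).hom := by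
        simp only [W, M, pre3, ml]; monoidal
    _ = _ := by rw [S.hc12]; simp only [W, M, pre3, wl]; monoidal

lemma z_ecomp (Z : C) :
    A ◁ A ◁ W S.e₁ Z ≫ A ◁ B A (A ⊗ Z) ≫ M S.m (A ⊗ A ⊗ Z) ≫ A ◁ M S.m Z =
      W S.e₂ (A ⊗ A ⊗ Z) ≫ A ◁ B A (A ⊗ Z) ≫ M S.m (A ⊗ A ⊗ Z) ≫ A ◁ M S.m Z := by
  calc _ = pre4 A Z ≫ (((A ⊗ A) ◁ S.e₁) ≫ midSw A ≫ (S.m ▷ (A ⊗ A)) ≫ (A ◁ S.m)) ▷ Z ≫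
        (α_ A A Z).hom := by
        simp only [W, M, B, pre4, midSw]; monoidal
    _ = _ := by rw [S.hecomp]; simp only [W, M, B, pre4, midSw]; monoidal

lemma z_ax1 (Z : C) : A ◁ W S.t₁ Z ≫ B A (A ⊗ Z) ≫ A ◁ W S.t₁ Z ≫ Bi A (A ⊗ Z) ≫ W S.t₁ (A ⊗ Z)
    = W S.t₁ (A ⊗ Z) ≫ A ◁ W S.t₁ Z := by
  calc _ = pre3 A Z ≫ ((A ◁ S.t₁) ≫ wl (β_ A A).hom ≫ (A ◁ S.t₁) ≫ wl (β_ A A).inv ≫ wl S.t₁) ▷ Z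
          ≫ post3 A Z := by
        simp only [W, B, Bi, pre3, post3, wl]; monoidal
    _ = _ := by rw [S.ax1]; simp only [W, pre3, post3, wl]; monoidal

lemma z_ax3 (Z : C) : W S.t₁ Z ≫ W S.e₁ Z = W S.t₁ Z := by
  calc _ = (α_ A A Z).inv ≫ (S.t₁ ≫ S.e₁) ▷ Z ≫ (α_ A A Z).hom := by
        simp only [W]; monoidal
    _ = _ := by rw [S.ax3]; simp only [W]

lemma z_ax5 (Z : C) : A ◁ W S.t₁ Z ≫ W S.e₁ (A ⊗ Z) = W S.e₁ (A ⊗ Z) ≫ A ◁ W S.t₁ Z := by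
  calc _ = pre3 A Z ≫ ((A ◁ S.t₁) ≫ wl S.e₁) ▷ Z ≫ post3 A Z := by
        simp only [W, pre3, post3, wl]; monoidal
    _ = _ := by rw [S.ax5]; simp only [W, pre3, post3, wl]; monoidal

lemma z_ax7 (Z : C) : W S.t₁ (A ⊗ Z) ≫ A ◁ J S.j (A ⊗ Z) ≫ M S.m Z =
    A ◁ B A Z ≫ A ◁ W S.e₁ Z ≫ A ◁ A ◁ J S.j Z ≫ M S.m Z := by
  calc _ = pre3 A Z ≫ (wl S.t₁ ≫ (A ◁ ((S.j ▷ A) ≫ (λ_ A).hom)) ≫ S.m) ▷ Z := by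
        simp only [W, M, J, pre3, wl]; monoidal
    _ = _ := by rw [S.ax7]; simp only [W, M, J, B, pre3]; monoidal

lemma z_ax8 (Z : C) : W S.t₁ (A ⊗ Z) ≫ A ◁ B A Z ≫ M S.m (A ⊗ Z) ≫ J S.j (A ⊗ Z) =
    A ◁ B A Z ≫ A ◁ W S.e₁ Z ≫ A ◁ J S.j (A ⊗ Z) ≫ M S.m Z := by
  calc _ = pre3 A Z ≫ (wl S.t₁ ≫ (A ◁ (β_ A A).hom) ≫ ml S.m ≫ (S.j ▷ A) ≫ (λ_ A).hom) ▷ Z := by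
        simp only [W, M, J, B, pre3, wl, ml]; monoidal
    _ = _ := by rw [S.ax8]; simp only [W, M, J, B, pre3]; monoidal

end RWMB

section Exch
set_option linter.unusedSectionVars false
variable {A : C}

lemma W_nat_a (f : A ⊗ A ⟶ A ⊗ A) {Z Z' Y : C} (h : Z ⟶ Z') (k : A ⊗ A ⊗ Z' ⟶ Y) :
    A ◁ A ◁ h ≫ W f Z' ≫ k = W f Z ≫ A ◁ A ◁ h ≫ k := by
  rw [reassoc_of% (W_nat f h)]

lemma M_nat_a (f : A ⊗ A ⟶ A) {Z Z' Y : C} (h : Z ⟶ Z') (k : A ⊗ Z' ⟶ Y) :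
    A ◁ A ◁ h ≫ M f Z' ≫ k = M f Z ≫ A ◁ h ≫ k := by
  rw [reassoc_of% (M_nat f h)]

lemma J_nat_a (f : A ⟶ 𝟙_ C) {Z Z' Y : C} (h : Z ⟶ Z') (k : Z' ⟶ Y) :
    A ◁ h ≫ J f Z' ≫ k = J f Z ≫ h ≫ k := by
  rw [reassoc_of% (J_nat f h)]

lemma B_nat_a {Z Z' Y : C} (h : Z ⟶ Z') (k : A ⊗ A ⊗ Z' ⟶ Y) :
    A ◁ A ◁ h ≫ B A Z' ≫ k = B A Z ≫ A ◁ A ◁ h ≫ k := W_nat_a _ h k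

lemma Bi_nat_a {Z Z' Y : C} (h : Z ⟶ Z') (k : A ⊗ A ⊗ Z' ⟶ Y) :
    A ◁ A ◁ h ≫ Bi A Z' ≫ k = Bi A Z ≫ A ◁ A ◁ h ≫ k := W_nat_a _ h k

lemma W_nat1 (f : A ⊗ A ⟶ A ⊗ A) {Z Z' : C} (h : Z ⟶ Z') :
    A ◁ A ◁ A ◁ h ≫ A ◁ W f Z' = A ◁ W f Z ≫ A ◁ A ◁ A ◁ h := by
  simp only [← whiskerLeft_comp, W_nat]

lemma M_nat1 (f : A ⊗ A ⟶ A) {Z Z' : C} (h : Z ⟶ Z') :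
    A ◁ A ◁ A ◁ h ≫ A ◁ M f Z' = A ◁ M f Z ≫ A ◁ A ◁ h := by
  simp only [← whiskerLeft_comp, M_nat]

lemma J_nat1 (f : A ⟶ 𝟙_ C) {Z Z' : C} (h : Z ⟶ Z') :
    A ◁ A ◁ h ≫ A ◁ J f Z' = A ◁ J f Z ≫ A ◁ h := by
  simp only [← whiskerLeft_comp, J_nat]

lemma B_nat1 {Z Z' : C} (h : Z ⟶ Z') :
    A ◁ A ◁ A ◁ h ≫ A ◁ B A Z' = A ◁ B A Z ≫ A ◁ A ◁ A ◁ h := W_nat1 _ h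

lemma W_nat1_a (f : A ⊗ A ⟶ A ⊗ A) {Z Z' Y : C} (h : Z ⟶ Z') (k : A ⊗ A ⊗ A ⊗ Z' ⟶ Y) :
    A ◁ A ◁ A ◁ h ≫ A ◁ W f Z' ≫ k = A ◁ W f Z ≫ A ◁ A ◁ A ◁ h ≫ k := by
  rw [reassoc_of% (W_nat1 f h)]

lemma M_nat1_a (f : A ⊗ A ⟶ A) {Z Z' Y : C} (h : Z ⟶ Z') (k : A ⊗ A ⊗ Z' ⟶ Y) :
    A ◁ A ◁ A ◁ h ≫ A ◁ M f Z' ≫ k = A ◁ M f Z ≫ A ◁ A ◁ h ≫ k := by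
  rw [reassoc_of% (M_nat1 f h)]

lemma J_nat1_a (f : A ⟶ 𝟙_ C) {Z Z' Y : C} (h : Z ⟶ Z') (k : A ⊗ Z' ⟶ Y) :
    A ◁ A ◁ h ≫ A ◁ J f Z' ≫ k = A ◁ J f Z ≫ A ◁ h ≫ k := by
  rw [reassoc_of% (J_nat1 f h)]

lemma B_nat1_a {Z Z' Y : C} (h : Z ⟶ Z') (k : A ⊗ A ⊗ A ⊗ Z' ⟶ Y) :
    A ◁ A ◁ A ◁ h ≫ A ◁ B A Z' ≫ k = A ◁ B A Z ≫ A ◁ A ◁ A ◁ h ≫ k := W_nat1_a _ h k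

lemma B_W_Bi (f : A ⊗ A ⟶ A ⊗ A) (Z : C) :
    B A (A ⊗ Z) ≫ A ◁ W f Z ≫ Bi A (A ⊗ Z) = A ◁ Bi A Z ≫ W f (A ⊗ Z) ≫ A ◁ B A Z := by
  have h := congrArg (fun x => A ◁ Bi A Z ≫ x ≫ Bi A (A ⊗ Z)) (W_BB f Z)
  simp only [assoc, B_Bi, comp_id] at h
  rw [h, ← whiskerLeft_comp_assoc, Bi_B, whiskerLeft_id, id_comp]

/-- the braid identity used for passing between the two forms of right non-degeneracy -/
lemma twist (m : A ⊗ A ⟶ A) (Z : C) :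
    A ◁ Bi A Z ≫ A ◁ Bi A Z ≫ B A (A ⊗ Z) ≫ M m (A ⊗ Z) =
      B A (A ⊗ Z) ≫ A ◁ B A Z ≫ A ◁ B A Z ≫ M m (A ⊗ Z) ≫ Bi A Z ≫ Bi A Z := by
  have e : ∀ {Y : C} (k : A ⊗ A ⊗ A ⊗ Z ⟶ Y), A ◁ B A Z ≫ A ◁ Bi A Z ≫ k = k := fun k => by
    rw [← whiskerLeft_comp_assoc, B_Bi, whiskerLeft_id, id_comp]
  have hY : ∀ {Y : C} (k : A ⊗ A ⊗ A ⊗ Z ⟶ Y),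
      B A (A ⊗ Z) ≫ A ◁ B A Z ≫ Bi A (A ⊗ Z) ≫ k =
        A ◁ Bi A Z ≫ B A (A ⊗ Z) ≫ A ◁ B A Z ≫ k := fun k => by
    have := B_W_Bi (β_ A A).hom Z
    change _ ≫ A ◁ B A Z ≫ _ = _ ≫ B A (A ⊗ Z) ≫ _ at this
    rw [reassoc_of% this]
  rw [reassoc_of% (M_Bi m Z), Bi_M, e, hY, hY, e]

end Exch

namespace RWMB
variable {A : C} {𝒴 : Set C} (S : RWMB A 𝒴)

lemma z_mult (Z : C) : M S.m (A ⊗ Z) ≫ W S.t₁ Z =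
    A ◁ W S.t₁ Z ≫ B A (A ⊗ Z) ≫ A ◁ W S.t₁ Z ≫ Bi A (A ⊗ Z) ≫ M S.m (A ⊗ Z) := by
  rw [← S.z_m1 (A ⊗ Z), assoc, ← J_nat, ← reassoc_of% (S.z_ax1 Z)]

lemma z_assoc (Z : C) : M S.m (A ⊗ Z) ≫ M S.m Z = A ◁ M S.m Z ≫ M S.m Z := by
  conv_lhs => rw [← S.z_m1 Z]
  rw [reassoc_of% (S.z_mult Z), reassoc_of% (B_W_Bi S.t₁ Z), z_ax8, ← whiskerLeft_comp_assoc,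
    ← whiskerLeft_comp_assoc, ← whiskerLeft_comp_assoc, ← whiskerLeft_comp_assoc,
    assoc, assoc, assoc, reassoc_of% (Bi_B (A := A) Z), reassoc_of% (S.z_ax3 Z), z_m1]

end RWMB

namespace RWMB
variable {A : C} {𝒴 : Set C} (S : RWMB A 𝒴)

lemma ndL {X Y : C} (hY : Y ∈ 𝒴) {f g : X ⟶ A ⊗ Y}
    (h : A ◁ f ≫ M S.m Y = A ◁ g ≫ M S.m Y) : f = g := S.ndl X Y hY h

lemma ndL1 {X : C} {f g : X ⟶ A ⊗ A ⊗ 𝟙_ C}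
    (h : A ◁ f ≫ M S.m (A ⊗ 𝟙_ C) = A ◁ g ≫ M S.m (A ⊗ 𝟙_ C)) : f = g := by
  have h2 : f ≫ A ◁ (ρ_ A).hom = g ≫ A ◁ (ρ_ A).hom := by
    apply S.ndL S.memA
    simp only [whiskerLeft_comp, assoc, M_nat]
    rw [reassoc_of% h]
  simpa using h2

lemma ndD {X : C} {f g : X ⟶ A ⊗ A ⊗ 𝟙_ C}
    (h : A ◁ A ◁ f ≫ A ◁ B A (A ⊗ 𝟙_ C) ≫ M S.m (A ⊗ A ⊗ 𝟙_ C) ≫ A ◁ M S.m (𝟙_ C) =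
      A ◁ A ◁ g ≫ A ◁ B A (A ⊗ 𝟙_ C) ≫ M S.m (A ⊗ A ⊗ 𝟙_ C) ≫ A ◁ M S.m (𝟙_ C)) : f = g := by
  simp only [← M_nat, ← whiskerLeft_comp_assoc] at h
  have h1 := S.ndL1 h
  have h2 := congrArg (fun x => x ≫ Bi A (𝟙_ C)) h1
  simp only [assoc, Bi_M] at h2
  rw [reassoc_of% (B_Bi (A := A) (A ⊗ 𝟙_ C)), ← whiskerLeft_comp_assoc,
    ← whiskerLeft_comp_assoc] at h2
  have h3 := congrArg (fun x => x ≫ B A (𝟙_ C)) (S.ndL1 h2)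
  simpa only [assoc, Bi_B, comp_id] using h3

lemma ndR_tail1 {X : C} {f g : X ⟶ A} (h : f ▷ A ≫ S.m = g ▷ A ≫ S.m) : f = g := by
  have h2 : f ≫ (ρ_ A).inv = g ≫ (ρ_ A).inv := by
    apply S.ndr X _ S.memI
    have key : ∀ f : X ⟶ A, A ◁ (f ≫ (ρ_ A).inv) ≫ (α_ A A (𝟙_ C)).inv ≫
        ((β_ A A).hom ≫ S.m) ▷ 𝟙_ C = (β_ A X).hom ≫ (f ▷ A ≫ S.m) ≫ (ρ_ A).inv := by
      intro f
      rw [assoc, ← BraidedCategory.braiding_naturality_right_assoc]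
      monoidal
    change A ◁ (f ≫ (ρ_ A).inv) ≫ (α_ A A (𝟙_ C)).inv ≫ ((β_ A A).hom ≫ S.m) ▷ 𝟙_ C =
      A ◁ (g ≫ (ρ_ A).inv) ≫ (α_ A A (𝟙_ C)).inv ≫ ((β_ A A).hom ≫ S.m) ▷ 𝟙_ C
    rw [key, key, h]
  simpa using h2

/-- tail used in the second form of right non-degeneracy -/
def tail : (A ⊗ A) ⊗ A ⟶ A ⊗ A :=
  (α_ A A A).hom ≫ (A ◁ (β_ A A).hom) ≫ (α_ A A A).inv ≫ S.m ▷ A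

lemma ndR_tail2 {X : C} {f g : X ⟶ A ⊗ A} (h : f ▷ A ≫ S.tail = g ▷ A ≫ S.tail) : f = g := by
  have h2 : f ≫ (β_ A A).inv ≫ (β_ A A).inv = g ≫ (β_ A A).inv ≫ (β_ A A).inv := by
    apply S.ndr X _ S.memA
    have tw : A ◁ (β_ A A).inv ≫ A ◁ (β_ A A).inv ≫ (α_ A A A).inv ≫ ((β_ A A).hom ≫ S.m) ▷ A =
        (β_ A (A ⊗ A)).hom ≫ S.tail ≫ (β_ A A).inv ≫ (β_ A A).inv := by
      rw [hexR]
      calc _ = 𝟙 _ ⊗≫ (A ◁ Bi A (𝟙_ C) ≫ A ◁ Bi A (𝟙_ C) ≫ B A (A ⊗ (𝟙_ C)) ≫ M S.m (A ⊗ (𝟙_ C)))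
            ⊗≫ 𝟙 _ := by simp only [M, B, Bi, W]; monoidal
        _ = _ := by rw [twist]; simp only [M, B, Bi, W, tail]; monoidal
    have key : ∀ f : X ⟶ A ⊗ A, A ◁ (f ≫ (β_ A A).inv ≫ (β_ A A).inv) ≫ (α_ A A A).inv ≫
        ((β_ A A).hom ≫ S.m) ▷ A =
          (β_ A X).hom ≫ (f ▷ A ≫ S.tail) ≫ (β_ A A).inv ≫ (β_ A A).inv := by
      intro f
      rw [assoc, ← BraidedCategory.braiding_naturality_right_assoc, ← tw]
      simp only [whiskerLeft_comp, assoc]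
    change A ◁ (f ≫ (β_ A A).inv ≫ (β_ A A).inv) ≫ (α_ A A A).inv ≫ ((β_ A A).hom ≫ S.m) ▷ A =
      A ◁ (g ≫ (β_ A A).inv ≫ (β_ A A).inv) ≫ (α_ A A A).inv ≫ ((β_ A A).hom ≫ S.m) ▷ A
    rw [key, key, h]
  simpa using h2

lemma z_t1lin_one : A ◁ M S.m (𝟙_ C) ≫ W S.t₁ (𝟙_ C) = W S.t₁ (A ⊗ 𝟙_ C) ≫ A ◁ M S.m (𝟙_ C) := by
  apply S.ndL1
  have h := congrArg (A ◁ ·) (S.z_assoc (𝟙_ C))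
  simp only [whiskerLeft_comp] at h ⊢
  rw [assoc, assoc, z_c12, W_nat_a, ← h, M_nat, reassoc_of% (S.z_c12 (A ⊗ 𝟙_ C))]

lemma z_t1lin (Z : C) : A ◁ M S.m Z ≫ W S.t₁ Z = W S.t₁ (A ⊗ Z) ≫ A ◁ M S.m Z := by
  calc _ = 𝟙 _ ⊗≫ (A ◁ M S.m (𝟙_ C) ≫ W S.t₁ (𝟙_ C)) ▷ Z ⊗≫ 𝟙 _ := by
        simp only [M, W]; monoidal
    _ = _ := by rw [z_t1lin_one]; simp only [M, W]; monoidal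

lemma z_e1lin_one : A ◁ M S.m (𝟙_ C) ≫ W S.e₁ (𝟙_ C) = W S.e₁ (A ⊗ 𝟙_ C) ≫ A ◁ M S.m (𝟙_ C) := by
  apply S.ndD
  have h := congrArg (A ◁ ·) (S.z_assoc (𝟙_ C))
  simp only [whiskerLeft_comp] at h ⊢
  rw [assoc, assoc, z_ecomp, W_nat_a, B_nat1_a, M_nat_a, ← h,
    ← reassoc_of% (S.z_ecomp (A ⊗ 𝟙_ C))]

lemma z_e1lin (Z : C) : A ◁ M S.m Z ≫ W S.e₁ Z = W S.e₁ (A ⊗ Z) ≫ A ◁ M S.m Z := by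
  calc _ = 𝟙 _ ⊗≫ (A ◁ M S.m (𝟙_ C) ≫ W S.e₁ (𝟙_ C)) ▷ Z ⊗≫ 𝟙 _ := by
        simp only [M, W]; monoidal
    _ = _ := by rw [z_e1lin_one]; simp only [M, W]; monoidal

lemma Rlin : ml S.m ≫ S.piBarR2 = A ◁ S.piBarR2 ≫ S.m := by
  apply S.ndR_tail1
  have h := congrArg (A ◁ ·) (S.z_ax7 (𝟙_ C))
  simp only [whiskerLeft_comp] at h
  calc _ = 𝟙 _ ⊗≫ (M S.m (A ⊗ A ⊗ 𝟙_ C) ≫ W S.t₁ (A ⊗ 𝟙_ C) ≫ A ◁ J S.j (A ⊗ 𝟙_ C) ≫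
          M S.m (𝟙_ C)) ⊗≫ 𝟙 _ := by
        simp only [M, W, J, ml, piBarR2]; monoidal
    _ = 𝟙 _ ⊗≫ (A ◁ W S.t₁ (A ⊗ 𝟙_ C) ≫ A ◁ A ◁ J S.j (A ⊗ 𝟙_ C) ≫ M S.m (A ⊗ 𝟙_ C) ≫
          M S.m (𝟙_ C)) ⊗≫ 𝟙 _ := by
        congr 1
        rw [z_ax7, ← M_nat_a, ← M_nat_a, ← M_nat_a, z_assoc, reassoc_of% h]
    _ = _ := by simp only [M, W, J, piBarR2]; monoidal

lemma z_Rlin (Z : C) : M S.m (A ⊗ Z) ≫ W S.t₁ Z ≫ A ◁ J S.j Z =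
    A ◁ W S.t₁ Z ≫ A ◁ A ◁ J S.j Z ≫ M S.m Z := by
  calc _ = 𝟙 _ ⊗≫ (ml S.m ≫ S.piBarR2) ▷ Z ⊗≫ 𝟙 _ := by
        simp only [M, W, J, ml, piBarR2]; monoidal
    _ = _ := by rw [Rlin]; simp only [M, W, J, piBarR2]; monoidal

lemma z_K (Z : C) : A ◁ W S.t₁ (A ⊗ Z) ≫ W S.t₁ (A ⊗ A ⊗ Z) ≫ A ◁ J S.j (A ⊗ A ⊗ Z) ≫
      A ◁ B A Z ≫ M S.m (A ⊗ Z) =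
    A ◁ M S.m (A ⊗ Z) ≫ A ◁ B A Z ≫ A ◁ W S.e₁ Z ≫ M S.m (A ⊗ Z) := by
  have h1 := congrArg (A ◁ ·) (W_BB S.t₁ Z)
  have h2 := congrArg (A ◁ ·) (S.z_ax5 Z)
  have h3 := congrArg (A ◁ ·) (S.z_e1lin Z)
  have h4 := congrArg (A ◁ ·) (M_B S.m Z)
  have h5 := congrArg (A ◁ A ◁ ·) (S.z_m1 Z)
  simp only [whiskerLeft_comp] at h1 h2 h3 h4 h5
  rw [← J_nat1_a, ← W_nat_a, z_ax7, reassoc_of% h1, reassoc_of% h2, reassoc_of% h5,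
    ← reassoc_of% h3, reassoc_of% h4]

end RWMB

section Reg
set_option linter.unusedSectionVars false

lemma regEpi_map {D : Type u} [Category.{v} D] (F : C ⥤ D)
    [PreservesColimitsOfShape WalkingParallelPair F] {X Y : C} {f : X ⟶ Y}
    (h : Nonempty (RegularEpi f)) : Nonempty (RegularEpi (F.map f)) := by
  obtain ⟨h⟩ := h
  exact ⟨{ W := F.obj h.W
           left := F.map h.left
           right := F.map h.right
           w := by rw [← F.map_comp, ← F.map_comp, h.w]
           isColimit := isColimitCoforkMapOfIsColimit F h.w h.isColimit }⟩

end Reg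

namespace RWMB
variable {A : C} {𝒴 : Set C} (S : RWMB A 𝒴)

lemma exists_g
    (presL : ∀ X : C, PreservesColimitsOfShape WalkingParallelPair (tensorLeft X))
    (hmreg : Nonempty (RegularEpi S.m)) :
    ∃ g : A ⊗ A ⟶ A ⊗ A, (A ◁ S.m) ≫ g = (A ◁ S.t₁) ≫ ml S.piBarR2 := by
  obtain ⟨h⟩ := hmreg
  have := presL A
  have hc := isColimitCoforkMapOfIsColimit (tensorLeft A) h.w h.isColimit
  have key : ((A ◁ S.t₁) ≫ ml S.piBarR2) ▷ A ≫ S.tail =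
      (A ◁ S.m) ▷ A ≫ (α_ A A A).hom ≫ A ◁ (β_ A A).hom ≫ A ◁ S.e₁ ≫ (α_ A A A).inv ≫
        S.m ▷ A := by
    calc _ = 𝟙 _ ⊗≫ (A ◁ W S.t₁ (A ⊗ 𝟙_ C) ≫ W S.t₁ (A ⊗ A ⊗ 𝟙_ C) ≫
          A ◁ J S.j (A ⊗ A ⊗ 𝟙_ C) ≫ A ◁ B A (𝟙_ C) ≫ M S.m (A ⊗ 𝟙_ C)) ⊗≫ 𝟙 _ := by
          simp only [M, W, B, J, ml, piBarR2, tail]; monoidal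
      _ = _ := by rw [z_K]; simp only [M, W, B]; monoidal
  have e : A ◁ h.left ≫ (A ◁ S.t₁) ≫ ml S.piBarR2 = A ◁ h.right ≫ (A ◁ S.t₁) ≫ ml S.piBarR2 := by
    apply S.ndR_tail2
    rw [comp_whiskerRight (A ◁ h.left), comp_whiskerRight (A ◁ h.right), assoc, assoc, key, ← comp_whiskerRight_assoc,
      ← comp_whiskerRight_assoc, ← whiskerLeft_comp, ← whiskerLeft_comp, h.w]
  obtain ⟨g, hg⟩ := Cofork.IsColimit.desc' hc _ e
  exact ⟨g, hg⟩

lemma lemma_g_aux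
    (hE1 : ∀ Z : C, Epi (A ◁ M S.m Z)) (hE2 : ∀ Z : C, Epi (A ◁ A ◁ M S.m Z))
    (g : A ⊗ A ⟶ A ⊗ A) (hg : (A ◁ S.m) ≫ g = (A ◁ S.t₁) ≫ ml S.piBarR2) :
      (ml S.m ≫ g = wl S.t₂ ≫ (A ◁ S.piBarL1)) ∧
      (wl g ≫ (A ◁ (β_ A A).hom) ≫ ml S.m
        = (A ◁ (β_ A A).hom) ≫ (A ◁ S.e₁) ≫ ml S.m) ∧
      ((A ◁ g) ≫ wl (β_ A A).hom ≫ (A ◁ S.m)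
        = wl (β_ A A).hom ≫ wl S.e₂ ≫ (A ◁ S.m)) ∧
      (ml S.m ≫ g = (A ◁ g) ≫ ml S.m) ∧
      ((A ◁ S.m) ≫ g = wl g ≫ (A ◁ S.m)) ∧
      (g ≫ (A ◁ S.j) ≫ (ρ_ A).hom = S.piBarR2) ∧
      (g ≫ (S.j ▷ A) ≫ (λ_ A).hom = S.piBarL1) := by
  have zg : ∀ Z, A ◁ M S.m Z ≫ W g Z =
      A ◁ W S.t₁ Z ≫ W S.t₁ (A ⊗ Z) ≫ A ◁ J S.j (A ⊗ Z) := by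
    intro Z
    calc _ = 𝟙 _ ⊗≫ ((A ◁ S.m) ≫ g) ▷ Z ⊗≫ 𝟙 _ := by simp only [M, W]; monoidal
      _ = _ := by rw [hg]; simp only [W, J, ml, piBarR2]; monoidal
  have zg1 : ∀ Z, A ◁ A ◁ M S.m Z ≫ A ◁ W g Z =
      A ◁ A ◁ W S.t₁ Z ≫ A ◁ W S.t₁ (A ⊗ Z) ≫ A ◁ A ◁ J S.j (A ⊗ Z) := by
    intro Z
    simp only [← whiskerLeft_comp, zg]
  -- (2a)
  have z2a : ∀ Z, W g (A ⊗ Z) ≫ A ◁ B A Z ≫ M S.m (A ⊗ Z) =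
      A ◁ B A Z ≫ A ◁ W S.e₁ Z ≫ M S.m (A ⊗ Z) := by
    intro Z
    have := hE1 (A ⊗ Z)
    rw [← cancel_epi (A ◁ M S.m (A ⊗ Z)), reassoc_of% (zg (A ⊗ Z)), z_K]
  -- (3a)
  have z3a : ∀ Z, M S.m (A ⊗ Z) ≫ W g Z = A ◁ W g Z ≫ M S.m (A ⊗ Z) := by
    intro Z
    have := hE2 Z
    rw [← cancel_epi (A ◁ A ◁ M S.m Z), reassoc_of% (zg1 Z), M_nat_a, zg, ← M_nat_a, z_Rlin]
  -- (3b)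
  have z3b : ∀ Z, A ◁ M S.m Z ≫ W g Z = W g (A ⊗ Z) ≫ A ◁ M S.m Z := by
    intro Z
    have := hE1 (A ⊗ Z)
    have h := congrArg (A ◁ ·) (S.z_assoc Z)
    have h1 := congrArg (A ◁ ·) (S.z_t1lin Z)
    simp only [whiskerLeft_comp] at h h1
    rw [← cancel_epi (A ◁ M S.m (A ⊗ Z)), reassoc_of% h, zg, reassoc_of% h1, W_nat_a, J_nat1,
      reassoc_of% (zg (A ⊗ Z))]
  -- (4a)
  have r4a : g ≫ (A ◁ S.j) ≫ (ρ_ A).hom = S.piBarR2 := by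
    apply S.ndR_tail1
    have h := congrArg (A ◁ ·) (B_J' S.j (𝟙_ C))
    simp only [whiskerLeft_comp] at h
    calc _ = 𝟙 _ ⊗≫ (W g (A ⊗ 𝟙_ C) ≫ A ◁ J S.j (A ⊗ 𝟙_ C) ≫ M S.m (𝟙_ C)) ⊗≫ 𝟙 _ := by
          simp only [M, W, J]; monoidal
      _ = 𝟙 _ ⊗≫ (W S.t₁ (A ⊗ 𝟙_ C) ≫ A ◁ J S.j (A ⊗ 𝟙_ C) ≫ M S.m (𝟙_ C)) ⊗≫ 𝟙 _ := by
          congr 1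
          rw [z_ax7, ← h, assoc, M_nat, reassoc_of% (z2a (𝟙_ C))]
      _ = _ := by simp only [M, W, J, piBarR2]; monoidal
  -- (4b)
  have r4b : g ≫ (S.j ▷ A) ≫ (λ_ A).hom = S.piBarL1 := by
    apply S.ndR_tail1
    calc _ = 𝟙 _ ⊗≫ (W g (A ⊗ 𝟙_ C) ≫ J S.j (A ⊗ A ⊗ 𝟙_ C) ≫ M S.m (𝟙_ C)) ⊗≫ 𝟙 _ := by
          simp only [M, W, J]; monoidal
      _ = 𝟙 _ ⊗≫ (W S.t₂ (A ⊗ 𝟙_ C) ≫ J S.j (A ⊗ A ⊗ 𝟙_ C) ≫ M S.m (𝟙_ C)) ⊗≫ 𝟙 _ := by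
          congr 1
          rw [← J_nat, ← reassoc_of% (z3b (𝟙_ C)), reassoc_of% (zg (𝟙_ C)), J_nat,
            reassoc_of% (S.z_m1 (A ⊗ 𝟙_ C)), reassoc_of% (S.z_c12 (𝟙_ C))]
      _ = _ := by simp only [M, W, J, piBarL1]; monoidal
  -- (1b)
  have z1b : ∀ Z, M S.m (A ⊗ Z) ≫ W g Z = W S.t₂ (A ⊗ Z) ≫ A ◁ W g Z ≫ A ◁ J S.j (A ⊗ Z) := by
    intro Z
    have := hE2 Z
    have h5 := congrArg (A ◁ ·) (S.z_m1 (A ⊗ Z))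
    simp only [whiskerLeft_comp] at h5
    rw [← cancel_epi (A ◁ A ◁ M S.m Z), z3a, reassoc_of% (zg1 Z), M_nat,
      reassoc_of% (S.z_c12 (A ⊗ Z)), W_nat_a, W_nat_a, reassoc_of% (zg1 Z), J_nat1,
      reassoc_of% h5]
  have un3 : ∀ {P Q : A ⊗ A ⊗ A ⊗ 𝟙_ C ⟶ A ⊗ A ⊗ 𝟙_ C}, P = Q →
      A ◁ A ◁ (ρ_ A).inv ≫ P ≫ A ◁ (ρ_ A).hom = A ◁ A ◁ (ρ_ A).inv ≫ Q ≫ A ◁ (ρ_ A).hom := by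
    rintro P Q rfl; rfl
  refine ⟨?_, ?_, ?_, ?_, ?_, r4a, r4b⟩
  · rw [← r4b]
    refine Eq.trans ?_ ((un3 (z1b (𝟙_ C))).trans ?_)
    · simp only [M, W, ml]; monoidal
    · simp only [W, J, wl]; monoidal
  · refine Eq.trans ?_ ((un3 (z2a (𝟙_ C))).trans ?_)
    · simp only [M, W, B, ml, wl]; monoidal
    · simp only [M, W, B, ml]; monoidal
  · apply S.ndR_tail2
    have h2 := congrArg (A ◁ ·) (z2a (𝟙_ C))
    have h4 := congrArg (A ◁ ·) (M_B S.m (𝟙_ C))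
    simp only [whiskerLeft_comp] at h2 h4
    calc _ = 𝟙 _ ⊗≫ (A ◁ W g (A ⊗ 𝟙_ C) ≫ B A (A ⊗ A ⊗ 𝟙_ C) ≫ A ◁ M S.m (A ⊗ 𝟙_ C) ≫
            A ◁ B A (𝟙_ C) ≫ M S.m (A ⊗ 𝟙_ C)) ⊗≫ 𝟙 _ := by
          simp only [M, W, B, wl, tail]; monoidal
      _ = 𝟙 _ ⊗≫ (B A (A ⊗ A ⊗ 𝟙_ C) ≫ W S.e₂ (A ⊗ A ⊗ 𝟙_ C) ≫ A ◁ M S.m (A ⊗ 𝟙_ C) ≫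
            A ◁ B A (𝟙_ C) ≫ M S.m (A ⊗ 𝟙_ C)) ⊗≫ 𝟙 _ := by
          congr 1
          rw [reassoc_of% h4, M_nat, ← B_nat_a, reassoc_of% (W_nat S.e₂ (B A (𝟙_ C))).symm,
            ← S.z_ecomp (𝟙_ C), ← B_nat_a,
            ← reassoc_of% (B_M S.m (A ⊗ 𝟙_ C)), reassoc_of% h2,
            reassoc_of% (B_M S.m (A ⊗ 𝟙_ C)), B_nat_a (W S.e₁ (𝟙_ C))]
      _ = _ := by simp only [M, W, B, wl, tail]; monoidal
  · refine Eq.trans ?_ ((un3 (z3a (𝟙_ C))).trans ?_)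
    · simp only [M, W, ml]; monoidal
    · simp only [M, W, ml]; monoidal
  · refine Eq.trans ?_ ((un3 (z3b (𝟙_ C))).trans ?_)
    · simp only [M, W]; monoidal
    · simp only [M, W, wl]; monoidal

end RWMB
/-- Lemma 5.1: there is a unique morphism `g : A ⊗ A ⟶ A ⊗ A` with
`g ∘ (1 ⊗ m) = (⊓̄ᴿ₂ ⊗ 1) ∘ (1 ⊗ t₁)`, it is equivalently characterized by
`g ∘ (m ⊗ 1) = (1 ⊗ ⊓̄ᴸ₁) ∘ (t₂ ⊗ 1)`, and it satisfies properties (2)-(4). -/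
theorem lemma_g
    (presL : ∀ X : C, PreservesColimitsOfShape WalkingParallelPair (tensorLeft X))
    (presR : ∀ X : C, PreservesColimitsOfShape WalkingParallelPair (tensorRight X))
    {A : C} {𝒴 : Set C} (S : RWMB A 𝒴)
    (hmreg : Nonempty (RegularEpi S.m)) :
    ∃ g : A ⊗ A ⟶ A ⊗ A,
      -- (1) the two equivalent defining diagrams, each determining `g` uniquely
      ((A ◁ S.m) ≫ g = (A ◁ S.t₁) ≫ ml S.piBarR2) ∧
      (ml S.m ≫ g = wl S.t₂ ≫ (A ◁ S.piBarL1)) ∧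
      (∀ g' : A ⊗ A ⟶ A ⊗ A,
        (A ◁ S.m) ≫ g' = (A ◁ S.t₁) ≫ ml S.piBarR2 → g' = g) ∧
      (∀ g' : A ⊗ A ⟶ A ⊗ A,
        ml S.m ≫ g' = wl S.t₂ ≫ (A ◁ S.piBarL1) → g' = g) ∧
      -- (2) `(m ⊗ 1) ∘ (1 ⊗ c) ∘ (g ⊗ 1) = (m ⊗ 1) ∘ (1 ⊗ e₁) ∘ (1 ⊗ c)`
      (wl g ≫ (A ◁ (β_ A A).hom) ≫ ml S.m
        = (A ◁ (β_ A A).hom) ≫ (A ◁ S.e₁) ≫ ml S.m) ∧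
      -- and `(1 ⊗ m) ∘ (c ⊗ 1) ∘ (1 ⊗ g) = (1 ⊗ m) ∘ (e₂ ⊗ 1) ∘ (c ⊗ 1)`
      ((A ◁ g) ≫ wl (β_ A A).hom ≫ (A ◁ S.m)
        = wl (β_ A A).hom ≫ wl S.e₂ ≫ (A ◁ S.m)) ∧
      -- (3) `g ∘ (m ⊗ 1) = (m ⊗ 1) ∘ (1 ⊗ g)` and `g ∘ (1 ⊗ m) = (1 ⊗ m) ∘ (g ⊗ 1)`
      (ml S.m ≫ g = (A ◁ g) ≫ ml S.m) ∧
      ((A ◁ S.m) ≫ g = wl g ≫ (A ◁ S.m)) ∧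
      -- (4) `(1 ⊗ j) ∘ g = (1 ⊗ j) ∘ t₁ = ⊓̄ᴿ₂` and `(j ⊗ 1) ∘ g = (j ⊗ 1) ∘ t₂ = ⊓̄ᴸ₁`
      (g ≫ (A ◁ S.j) ≫ (ρ_ A).hom = S.piBarR2) ∧
      (g ≫ (S.j ▷ A) ≫ (λ_ A).hom = S.piBarL1) := by
  have hM : ∀ Z : C, Nonempty (RegularEpi (M S.m Z)) := by
    intro Z
    have := presR Z
    obtain ⟨h⟩ := regEpi_map (tensorRight Z) hmreg
    exact ⟨RegularEpi.ofArrowIso (Arrow.isoMk (α_ A A Z) (Iso.refl _) (by simp [M])) h⟩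
  have hL : ∀ {X Y : C} {f : X ⟶ Y}, Nonempty (RegularEpi f) →
      Nonempty (RegularEpi (A ◁ f)) := by
    intro X Y f h
    have := presL A
    exact regEpi_map (tensorLeft A) h
  have hep : ∀ {X Y : C} {f : X ⟶ Y}, Nonempty (RegularEpi f) → Epi f := by
    rintro X Y f ⟨h⟩
    exact RegularEpi.epi f h
  obtain ⟨g, hg⟩ := S.exists_g presL hmreg
  obtain ⟨h1, h2, h3, h4, h5, h6, h7⟩ := S.lemma_g_aux (fun Z => hep (hL (hM Z)))
    (fun Z => hep (hL (hL (hM Z)))) g hg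
  refine ⟨g, hg, h1, ?_, ?_, h2, h3, h4, h5, h6, h7⟩
  · intro g' hg'
    have := hep (hL hmreg)
    rw [← cancel_epi (A ◁ S.m), hg', hg]
  · intro g' hg'
    have : Epi (ml S.m) := hep (hM A)
    rw [← cancel_epi (ml S.m), hg', h1]

end WeakMultiplierBimonoid
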